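/- arXiv:1810.11722 — 4 statements merged into one kernel-verified Lean document; each statement's English description precedes it below -/
import Mathlib

section
/- Let Ω be an algebraically closed field and let E ⊆ A and E ⊆ B be subfields of Ω. Assume that the compositum AB (the subfield of Ω generated by A and B) is linearly disjoint over E from the relative algebraic closure of E in Ω (i.e. the extension AB/E is regular), and that A and B are linearly disjoint over E. Then (A^s + B^s) ∩ AB = A + B, where A^s and B^s denote the relative separable closures in Ω of A and of B respectively. -/
open Pointwise

/-- `S` and `T` are linearly disjoint over the subfield `E`: every finite family of
elements of `S` that is linearly independent over `E` is also linearly independent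
with coefficients taken from `T`. -/
def LinDisjOver {Ω : Type*} [Field Ω] (E : Subfield Ω) (S T : Set Ω) : Prop :=
  ∀ (n : ℕ) (a : Fin n → Ω), (∀ i, a i ∈ S) →
    (∀ c : Fin n → Ω, (∀ i, c i ∈ E) → ∑ i, c i * a i = 0 → ∀ i, c i = 0) →
    ∀ c : Fin n → Ω, (∀ i, c i ∈ T) → ∑ i, c i * a i = 0 → ∀ i, c i = 0

/-- The relative algebraic closure of a subfield `F` in `Ω`: the set of elements of `Ω`
that are algebraic over `F`. -/
def relAlgClosure {Ω : Type*} [Field Ω] (F : Subfield Ω) : Set Ω :=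
  {x : Ω | IsAlgebraic F x}

/-- The relative separable closure of a subfield `F` in `Ω`: the set of elements of `Ω`
that are separably algebraic over `F`. -/
def relSepClosure {Ω : Type*} [Field Ω] (F : Subfield Ω) : Set Ω :=
  {x : Ω | IsSeparable F x}

section
open TensorProduct

theorem aux_exists_point {k R : Type*} [Field k] [IsAlgClosed k] [CommRing R] [Nontrivial R]
    [Algebra k R] [Algebra.FiniteType k R] : Nonempty (R →ₐ[k] k) := by
  obtain ⟨m, hm⟩ := Ideal.exists_maximal R
  let _ := Ideal.Quotient.field m
  have : Module.Finite k (R ⧸ m) := finite_of_finite_type_of_isJacobsonRing k (R ⧸ m)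
  have hb := IsAlgClosed.algebraMap_bijective_of_isIntegral (k := k) (K := R ⧸ m)
  exact ⟨((AlgEquiv.ofBijective (Algebra.ofId k (R ⧸ m)) hb).symm.toAlgHom).comp
    (Ideal.Quotient.mkₐ k m)⟩

theorem aux_isDomain {k M L : Type*} [Field k] [IsAlgClosed k] [Field M] [Field L]
    [Algebra k M] [Algebra k L] : IsDomain (M ⊗[k] L) := by
  classical
  have : NoZeroDivisors (M ⊗[k] L) := by
    refine ⟨fun {u v} huv => ?_⟩
    by_contra! hne
    obtain ⟨hu, hv⟩ := hne
    let c := Module.Basis.ofVectorSpace k L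
    obtain ⟨m, rfl⟩ := TensorProduct.eq_repr_basis_right c u
    obtain ⟨n, rfl⟩ := TensorProduct.eq_repr_basis_right c v
    have hm : ∃ i, m i ≠ 0 := by
      by_contra! h
      exact hu (by rw [show m = 0 from Finsupp.ext h]; simp)
    have hn : ∃ i, n i ≠ 0 := by
      by_contra! h
      exact hv (by rw [show n = 0 from Finsupp.ext h]; simp)
    obtain ⟨i, hi⟩ := hm
    obtain ⟨j, hj⟩ := hn
    let s : Finset M := m.support.image m ∪ n.support.image n ∪ {(m i)⁻¹, (n j)⁻¹}
    let R := Algebra.adjoin k (s : Set M)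
    have : Algebra.FiniteType k R := Algebra.FiniteType.adjoin_of_finite s.finite_toSet
    have hsR : ∀ x ∈ s, x ∈ R := fun x hx => Algebra.subset_adjoin hx
    have hmR : ∀ a, m a ∈ R := fun a => by
      by_cases h : m a = 0
      · rw [h]; exact zero_mem _
      · exact hsR _ (by simp only [s, Finset.mem_union, Finset.mem_image, Finsupp.mem_support_iff]
                        exact Or.inl (Or.inl ⟨a, h, rfl⟩))
    have hnR : ∀ a, n a ∈ R := fun a => by
      by_cases h : n a = 0
      · rw [h]; exact zero_mem _
      · exact hsR _ (by simp only [s, Finset.mem_union, Finset.mem_image, Finsupp.mem_support_iff]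
                        exact Or.inl (Or.inr ⟨a, h, rfl⟩))
    obtain ⟨φ⟩ := aux_exists_point (k := k) (R := R)
    let ψ : R ⊗[k] L →ₐ[k] L := Algebra.TensorProduct.lift ((Algebra.ofId k L).comp φ)
      (AlgHom.id k L) (fun _ _ => Commute.all _ _)
    let ι : R ⊗[k] L →ₐ[k] M ⊗[k] L := Algebra.TensorProduct.map R.val (AlgHom.id k L)
    have hι : Function.Injective ι :=
      Module.Flat.rTensor_preserves_injective_linearMap (M := L) R.val.toLinearMap
        Subtype.val_injective
    have key : ∀ (m : _ →₀ M) (hmR : ∀ a, m a ∈ R) (i) (_ : m i ≠ 0) (_ : (m i)⁻¹ ∈ R),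
        ∃ u, ι u = m.sum (fun i x => x ⊗ₜ c i) ∧ ψ u ≠ 0 := by
      intro m hmR i hi hi'
      refine ⟨∑ a ∈ m.support, (⟨m a, hmR a⟩ : R) ⊗ₜ c a, ?_, ?_⟩
      · simp [ι, Finsupp.sum]
      · intro h
        have h2 : ∑ a ∈ m.support, φ ⟨m a, hmR a⟩ • c a = 0 := by
          simpa [ψ, Algebra.smul_def, Algebra.ofId_apply] using h
        have := linearIndependent_iff'.1 c.linearIndependent _ _ h2 i (by simpa using hi)
        have h3 : φ (⟨m i, hmR i⟩ * ⟨(m i)⁻¹, hi'⟩) = 1 := by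
          rw [← map_one φ]; congr 1; ext; simp [hi]
        rw [map_mul, this, zero_mul] at h3
        exact zero_ne_one h3
    obtain ⟨u', hu1, hu2⟩ := key m hmR i hi (hsR _ (by simp [s]))
    obtain ⟨v', hv1, hv2⟩ := key n hnR j hj (hsR _ (by simp [s]))
    have : u' * v' = 0 := hι (by rw [map_mul, hu1, hv1, huv, map_zero])
    have h4 := congrArg ψ this
    rw [map_mul, map_zero] at h4
    exact (mul_ne_zero hu2 hv2) h4
  exact NoZeroDivisors.to_isDomain _

theorem aux_injective {E k A B L M Ω : Type*} [Field E] [Field k] [IsAlgClosed k]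
    [Field A] [Field B] [Field L] [Field M] [Field Ω]
    [Algebra E A] [Algebra E B] [Algebra k L] [Algebra k M] [Algebra A L] [Algebra B M]
    [Algebra.IsAlgebraic A L] [Algebra.IsAlgebraic B M]
    (g : A ⊗[E] B →+* L ⊗[k] M) (hg1 : ∀ a, g (a ⊗ₜ 1) = algebraMap A L a ⊗ₜ 1)
    (hg2 : ∀ b, g (1 ⊗ₜ b) = 1 ⊗ₜ algebraMap B M b)
    (f : L ⊗[k] M →+* Ω) (hfg : Function.Injective (f.comp g)) : Function.Injective f := by
  have : IsDomain (L ⊗[k] M) := aux_isDomain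
  let _ := g.toAlgebra
  have hint : g.IsIntegral := by
    intro x
    induction x using TensorProduct.induction_on with
    | zero => exact g.isIntegralElem_zero
    | add x y hx hy => exact RingHom.IsIntegralElem.add _ hx hy
    | tmul x y =>
      have : x ⊗ₜ[k] y = (x ⊗ₜ[k] 1) * (1 ⊗ₜ[k] y) := by simp
      rw [this]
      refine RingHom.IsIntegralElem.mul _ ?_ ?_
      · obtain ⟨p, hp, hp2⟩ := Algebra.IsIntegral.isIntegral (R := A) x
        refine ⟨p.map (Algebra.TensorProduct.includeLeftRingHom : A →+* A ⊗[E] B), hp.map _, ?_⟩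
        have h2 : g.comp (Algebra.TensorProduct.includeLeftRingHom : A →+* A ⊗[E] B) =
          (Algebra.TensorProduct.includeLeftRingHom : L →+* L ⊗[k] M).comp (algebraMap A L) := by
          ext a; simpa using hg1 a
        rw [Polynomial.eval₂_map, h2]
        have := Polynomial.hom_eval₂ p (algebraMap A L)
          (Algebra.TensorProduct.includeLeftRingHom : L →+* L ⊗[k] M) x
        rw [hp2, map_zero] at this
        exact this.symm
      · obtain ⟨p, hp, hp2⟩ := Algebra.IsIntegral.isIntegral (R := B) y
        let iB : B →+* A ⊗[E] B := (Algebra.TensorProduct.includeRight : B →ₐ[E] A ⊗[E] B)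
        let iM : M →+* L ⊗[k] M := (Algebra.TensorProduct.includeRight : M →ₐ[k] L ⊗[k] M)
        refine ⟨p.map iB, hp.map _, ?_⟩
        have h2 : g.comp iB = iM.comp (algebraMap B M) := by
          ext a; simpa [iB, iM] using hg2 a
        rw [Polynomial.eval₂_map, h2]
        have := Polynomial.hom_eval₂ p (algebraMap B M) iM y
        rw [hp2, map_zero] at this
        exact this.symm
  have : Algebra.IsIntegral (A ⊗[E] B) (L ⊗[k] M) := ⟨hint⟩
  rw [RingHom.injective_iff_ker_eq_bot]
  refine Ideal.eq_bot_of_comap_eq_bot (R := A ⊗[E] B) ?_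
  rw [RingHom.injective_iff_ker_eq_bot] at hfg
  rw [← hfg]
  rfl

theorem aux_rep {F S ι : Type*} [Field F] [CommRing S] [Algebra F S] (A B : Subalgebra F S)
    (c : Module.Basis ι F B) (x : S) (hx : x ∈ A ⊔ B) : ∃ f : ι →₀ A,
      x = f.sum fun i t => (t : S) * (c i : S) := by
  rw [← Subalgebra.mulMap_range] at hx
  obtain ⟨u, rfl⟩ := hx
  obtain ⟨f, rfl⟩ := TensorProduct.eq_repr_basis_right (M := A) c u
  refine ⟨f, ?_⟩
  simp [Finsupp.sum]

theorem aux_linDisj {E Ω : Type*} [Field E] [Field Ω] [Algebra E Ω]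
    (k A B LA LB : IntermediateField E Ω) [IsAlgClosed k] (hkA : k ≤ LA) (hkB : k ≤ LB)
    (hA : A ≤ LA) (hB : B ≤ LB) (hLA : ∀ x ∈ LA, IsAlgebraic A x)
    (hLB : ∀ x ∈ LB, IsAlgebraic B x) (H : A.LinearDisjoint B) :
    (IntermediateField.extendScalars hkA).LinearDisjoint
      (IntermediateField.extendScalars hkB) := by
  set L := IntermediateField.extendScalars hkA with hL
  set M := IntermediateField.extendScalars hkB with hM
  let iA : A →ₐ[E] L :=
    { toFun := fun a => ⟨a, hA a.2⟩
      map_one' := rfl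
      map_mul' := fun _ _ => rfl
      map_zero' := rfl
      map_add' := fun _ _ => rfl
      commutes' := fun _ => rfl }
  let iB : B →ₐ[E] M :=
    { toFun := fun a => ⟨a, hB a.2⟩
      map_one' := rfl
      map_mul' := fun _ _ => rfl
      map_zero' := rfl
      map_add' := fun _ _ => rfl
      commutes' := fun _ => rfl }
  let _ : Algebra A L := iA.toRingHom.toAlgebra
  let _ : Algebra B M := iB.toRingHom.toAlgebra
  have _ : IsScalarTower A L Ω := IsScalarTower.of_algebraMap_eq fun _ => rfl
  have _ : IsScalarTower B M Ω := IsScalarTower.of_algebraMap_eq fun _ => rfl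
  have _ : Algebra.IsAlgebraic A L := ⟨fun x =>
    (isAlgebraic_algebraMap_iff (R := A) (S := L) (A := Ω) Subtype.val_injective).1 (hLA x x.2)⟩
  have _ : Algebra.IsAlgebraic B M := ⟨fun x =>
    (isAlgebraic_algebraMap_iff (R := B) (S := M) (A := Ω) Subtype.val_injective).1 (hLB x x.2)⟩
  let g : A ⊗[E] B →ₐ[E] L ⊗[k] M := Algebra.TensorProduct.lift
    ((Algebra.TensorProduct.includeLeft : L →ₐ[E] L ⊗[k] M).comp iA)
    (((Algebra.TensorProduct.includeRight : M →ₐ[k] L ⊗[k] M).restrictScalars E).comp iB)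
    (fun _ _ => Commute.all _ _)
  rw [IntermediateField.linearDisjoint_iff', Subalgebra.linearDisjoint_iff_injective] at H ⊢
  refine aux_injective (A := A) (B := B) g.toRingHom (fun a => ?_) (fun b => ?_)
    (L.toSubalgebra.mulMap M.toSubalgebra).toRingHom ?_
  · simp [g]; rfl
  · simp [g]; rfl
  · have : ((L.toSubalgebra.mulMap M.toSubalgebra).restrictScalars E).comp g =
        A.toSubalgebra.mulMap B.toSubalgebra := by
      apply Algebra.TensorProduct.ext'
      intro a b
      simp [g]
      rfl
    intro x y hxy
    apply H
    rw [← this]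
    exact hxy

theorem aux_mem_sup {E Ω : Type*} [Field E] [Field Ω] [Algebra E Ω]
    (A B LA LB k : IntermediateField E Ω) (hkA : k ≤ LA) (hkB : k ≤ LB)
    (hA : A ≤ LA) (hB : B ≤ LB)
    (H : (IntermediateField.extendScalars hkA).LinearDisjoint
      (IntermediateField.extendScalars hkB))
    (a b : Ω) (ha : a ∈ LA) (hb : b ∈ LB)
    (hc : ∃ y ∈ Subring.closure ((A : Set Ω) ∪ B), ∃ z ∈ Subring.closure ((A : Set Ω) ∪ B),
      y / z = a + b) : a ∈ A ⊔ k := by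
  have hc' : ∃ y ∈ Subring.closure ((A : Set Ω) ∪ B), ∃ z ∈ Subring.closure ((A : Set Ω) ∪ B),
      z ≠ 0 ∧ y / z = a + b := by
    obtain ⟨y, hy, z, hz, hyz⟩ := hc
    rcases eq_or_ne z 0 with rfl | hz0
    · exact ⟨0, zero_mem _, 1, one_mem _, one_ne_zero, by rw [← hyz]; simp⟩
    · exact ⟨y, hy, z, hz, hz0, hyz⟩
  obtain ⟨y, hy, z, hz, hz0, hyz⟩ := hc'
  set L := IntermediateField.extendScalars hkA with hL
  set M := IntermediateField.extendScalars hkB with hM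
  let A' : IntermediateField k Ω := IntermediateField.extendScalars (le_sup_right : k ≤ A ⊔ k)
  let c := Module.Basis.ofVectorSpace k M
  have hcl : ∀ x ∈ Subring.closure ((A : Set Ω) ∪ B), x ∈ A'.toSubalgebra ⊔ M.toSubalgebra := by
    intro x hx
    have : Subring.closure ((A : Set Ω) ∪ B) ≤
        (A'.toSubalgebra ⊔ M.toSubalgebra).toSubring := by
      rw [Subring.closure_le]
      rintro x (hx | hx)
      · exact (le_sup_left : A'.toSubalgebra ≤ _) ((le_sup_left : A ≤ A ⊔ k) hx)
      · exact (le_sup_right : M.toSubalgebra ≤ A'.toSubalgebra ⊔ _) (hB hx)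
    exact this hx
  have hrep : ∀ x ∈ A'.toSubalgebra ⊔ M.toSubalgebra, ∃ f : _ →₀ A',
      x = f.sum fun i t => (t : Ω) * (c i : Ω) :=
    fun x hx => aux_rep A'.toSubalgebra M.toSubalgebra c x hx
  obtain ⟨f, hf⟩ := hrep z (hcl z hz)
  obtain ⟨g, hg⟩ := hrep (y - b * z) (sub_mem (hcl y hy)
    (mul_mem ((le_sup_right : M.toSubalgebra ≤ A'.toSubalgebra ⊔ _) hb) (hcl z hz)))
  have hA' : ∀ t : A', (t : Ω) ∈ L := fun t =>
    (sup_le hA hkA : A ⊔ k ≤ LA) t.2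
  have heq : a * z = y - b * z := by
    field_simp at hyz; linear_combination -hyz
  have hli := H.linearIndependent_right c.linearIndependent
  classical
  have hall : ∀ i, a * (f i : Ω) = g i := by
    intro i
    by_cases hi : i ∈ f.support ∪ g.support
    · have := linearIndependent_iff'.1 hli (f.support ∪ g.support)
        (fun i => (⟨a, ha⟩ : L) * ⟨f i, hA' _⟩ - ⟨g i, hA' _⟩) (by
          rw [Finsupp.sum_of_support_subset f (Finset.subset_union_left (s₂ := g.support)) _
            (by simp)] at hf
          rw [Finsupp.sum_of_support_subset g (Finset.subset_union_right (s₁ := f.support)) _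
            (by simp)] at hg
          have : ∑ i ∈ f.support ∪ g.support, (a * (f i : Ω) - g i) * (c i : Ω) = 0 := by
            simp only [sub_mul, Finset.sum_sub_distrib, mul_assoc, ← Finset.mul_sum]
            rw [← hf, ← hg, heq, sub_self]
          exact this) i hi
      have := congrArg (Subtype.val) this
      exact sub_eq_zero.1 this
    · simp only [Finset.mem_union, Finsupp.mem_support_iff, not_or, not_not] at hi
      simp [hi.1, hi.2]
  have hex : ∃ i, f i ≠ 0 := by
    by_contra! h
    exact hz0 (by rw [hf, show f = 0 from Finsupp.ext h]; simp)
  obtain ⟨i, hi⟩ := hex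
  have hi' : (f i : Ω) ≠ 0 := fun h => hi (Subtype.ext h)
  rw [eq_div_of_mul_eq hi' (hall i)]
  exact div_mem (g i).2 (f i).2

theorem aux_final {E Ω : Type*} [Field E] [Field Ω] [Algebra E Ω]
    (A B K k : IntermediateField E Ω) [Algebra.IsAlgebraic E k] (hA : A ≤ K) (hB : B ≤ K)
    (H : K.LinearDisjoint k) (a b : Ω) (ha : a ∈ A ⊔ k) (hb : b ∈ B ⊔ k) (hab : a + b ∈ K) :
    ∃ x ∈ A, ∃ y ∈ B, x + y = a + b := by
  classical
  let c := Module.Basis.ofVectorSpace E k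
  have hrep : ∀ A : IntermediateField E Ω, ∀ x ∈ A ⊔ k, ∃ f : _ →₀ A,
      x = f.sum fun i t => (t : Ω) * (c i : Ω) := by
    intro A x hx
    rw [← IntermediateField.mem_toSubalgebra,
      IntermediateField.sup_toSubalgebra_of_isAlgebraic_right] at hx
    exact aux_rep A.toSubalgebra k.toSubalgebra c x hx
  obtain ⟨f, hf⟩ := hrep A a ha
  obtain ⟨g, hg⟩ := hrep B b hb
  let r := c.repr 1
  have hr : (1 : Ω) = r.sum fun i t => algebraMap E Ω t * (c i : Ω) := by
    have := congrArg (algebraMap k Ω) (c.linearCombination_repr 1)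
    rw [Finsupp.linearCombination_apply, map_one (algebraMap k Ω)] at this
    rw [← this, Finsupp.sum, Finsupp.sum, map_sum]
    refine Finset.sum_congr rfl fun i _ => ?_
    rw [Algebra.smul_def, map_mul]
    rfl
  have hli := H.linearIndependent_right c.linearIndependent
  let s := f.support ∪ g.support ∪ r.support
  rw [Finsupp.sum_of_support_subset f (s := s) (by intro x hx; simp only [s, Finset.mem_union]; tauto) _ (by simp)] at hf
  rw [Finsupp.sum_of_support_subset g (s := s) (by intro x hx; simp only [s, Finset.mem_union]; tauto) _ (by simp)] at hg
  rw [Finsupp.sum_of_support_subset r (s := s) (by intro x hx; simp only [s, Finset.mem_union]; tauto) _ (by simp)] at hr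
  have hall := linearIndependent_iff'.1 hli s
    (fun i => ⟨f i, hA (f i).2⟩ + ⟨g i, hB (g i).2⟩ - ⟨a + b, hab⟩ * algebraMap E K (r i)) (by
      have : ∑ i ∈ s, ((f i : Ω) + g i - (a + b) * algebraMap E Ω (r i)) * (c i : Ω) = 0 := by
        simp only [sub_mul, add_mul _ _ (c _ : Ω), Finset.sum_sub_distrib, Finset.sum_add_distrib,
          mul_assoc, ← Finset.mul_sum]
        rw [← hf, ← hg, ← hr]; ring
      exact this)
  have hex : ∃ i, r i ≠ 0 := by
    by_contra! h
    exact one_ne_zero (α := Ω) (by rw [hr]; simp [h])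
  obtain ⟨i, hi⟩ := hex
  have h1 : (f i : Ω) + g i - (a + b) * algebraMap E Ω (r i) = 0 :=
    congrArg Subtype.val (hall i (by simp [s, hi]))
  have hi' : algebraMap E Ω (r i) ≠ 0 := by simpa using hi
  refine ⟨f i / algebraMap E Ω (r i), div_mem (f i).2 (algebraMap_mem _ _),
    g i / algebraMap E Ω (r i), div_mem (g i).2 (algebraMap_mem _ _), ?_⟩
  rw [← add_div, div_eq_iff hi']
  linear_combination h1

theorem aux_conv {Ω : Type*} [Field Ω] (E : Subfield Ω) (S T : IntermediateField E Ω)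
    (h : LinDisjOver E (S : Set Ω) (T : Set Ω)) : S.LinearDisjoint T := by
  classical
  let c := Module.Basis.ofVectorSpace E S
  refine IntermediateField.LinearDisjoint.of_basis_left c ?_
  rw [linearIndependent_iff']
  intro s g hg i hi
  let e := s.equivFin
  have hli := linearIndependent_iff'.1 c.linearIndependent s
  have tr : ∀ F : Module.Basis.ofVectorSpaceIndex E S → Ω, ∑ j, F (e.symm j) = ∑ i ∈ s, F i := by
    intro F
    rw [Equiv.sum_comp e.symm (fun x : s => F x), Finset.sum_coe_sort s F]
  have := h s.card (fun j => (c (e.symm j) : Ω)) (fun j => (c (e.symm j)).2) (by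
    intro d hd hsum j
    let d' : _ → E := fun i => if hi : i ∈ s then ⟨d (e ⟨i, hi⟩), hd _⟩ else 0
    have hd' : ∀ j, (d' (e.symm j) : Ω) = d j := fun j => by simp [d']
    have h0 : ∑ i ∈ s, d' i • c i = 0 := by
      apply S.val.injective
      have : ∑ i ∈ s, (d' i : Ω) * (c i : Ω) = 0 := by
        rw [← tr (fun i => (d' i : Ω) * (c i : Ω)), ← hsum]
        exact Finset.sum_congr rfl fun j _ => by rw [hd']
      rw [map_sum, map_zero]
      exact this
    have := hli d' h0 (e.symm j) (e.symm j).2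
    rw [← hd', this]; rfl) (fun j => (g (e.symm j) : Ω)) (fun j => (g (e.symm j)).2) (by
      rw [tr (fun i => (g i : Ω) * (c i : Ω))]
      exact hg) (e ⟨i, hi⟩)
  simpa using this


end

/-- Let `Ω` be an algebraically closed field and `E ⊆ A`, `E ⊆ B` subfields of `Ω`.
If the compositum `A ⊔ B` is linearly disjoint over `E` from the relative algebraic
closure of `E` in `Ω` (i.e. `AB/E` is regular), and `A` and `B` are linearly disjoint
over `E`, then `(Aˢ + Bˢ) ∩ AB = A + B`. -/
theorem sep_add_inter_compositum {Ω : Type*} [Field Ω] [IsAlgClosed Ω]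
    (E A B : Subfield Ω) (hEA : E ≤ A) (hEB : E ≤ B)
    (hreg : LinDisjOver E ((A ⊔ B : Subfield Ω) : Set Ω) (relAlgClosure E))
    (hdisj : LinDisjOver E (A : Set Ω) (B : Set Ω)) :
    (relSepClosure A + relSepClosure B) ∩ ((A ⊔ B : Subfield Ω) : Set Ω) =
      (A : Set Ω) + (B : Set Ω) := by
  apply Set.Subset.antisymm
  · rintro _ ⟨⟨a, ha, b, hb, rfl⟩, hc⟩
    let k : IntermediateField E Ω := algebraicClosure E Ω
    have hk : IsAlgClosed k := (algebraicClosure.isAlgClosure (F := E) (E := Ω)).isAlgClosed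
    have hE : ∀ F : Subfield Ω, E ≤ F → ∀ x : E, algebraMap E Ω x ∈ F := fun F h x => h x.2
    have hFF : ∀ F : Subfield Ω, F ≤ (algebraicClosure F Ω).toSubfield := fun F x hx =>
      (algebraicClosure F Ω).algebraMap_mem ⟨x, hx⟩
    have hkF : ∀ F : Subfield Ω, E ≤ F → ∀ x, IsIntegral E x → x ∈ algebraicClosure F Ω := by
      intro F h x hx
      obtain ⟨p, hp, hp2⟩ := hx
      exact ⟨p.map (Subfield.inclusion h), hp.map _, by rw [Polynomial.eval₂_map]; exact hp2⟩
    let A' : IntermediateField E Ω := A.toIntermediateField (hE A hEA)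
    let B' : IntermediateField E Ω := B.toIntermediateField (hE B hEB)
    let K : IntermediateField E Ω := (A ⊔ B).toIntermediateField (hE _ (hEA.trans le_sup_left))
    let LA : IntermediateField E Ω := (algebraicClosure A Ω).toSubfield.toIntermediateField
      (hE _ (hEA.trans (hFF A)))
    let LB : IntermediateField E Ω := (algebraicClosure B Ω).toSubfield.toIntermediateField
      (hE _ (hEB.trans (hFF B)))
    have hkA : k ≤ LA := fun x hx => hkF A hEA x hx
    have hkB : k ≤ LB := fun x hx => hkF B hEB x hx
    have hA : A' ≤ LA := fun x hx => hFF A hx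
    have hB : B' ≤ LB := fun x hx => hFF B hx
    have hLA : ∀ x ∈ LA, IsAlgebraic A' x := fun x hx =>
      (mem_algebraicClosure_iff (F := A) (E := Ω)).1 hx
    have hLB : ∀ x ∈ LB, IsAlgebraic B' x := fun x hx =>
      (mem_algebraicClosure_iff (F := B) (E := Ω)).1 hx
    have hAB : A'.LinearDisjoint B' := aux_conv E A' B' hdisj
    have hset : relAlgClosure E = (k : Set Ω) := by
      ext x; exact mem_algebraicClosure_iff.symm
    have hKk : K.LinearDisjoint k := aux_conv E K k (by rw [← hset]; exact hreg)
    have hLM := aux_linDisj k A' B' LA LB hkA hkB hA hB hLA hLB hAB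
    have haL : a ∈ LA := IsSeparable.isIntegral ha
    have hbL : b ∈ LB := IsSeparable.isIntegral hb
    have hcl : ∀ A B : Subfield Ω, A ⊔ B = Subfield.closure ((A : Set Ω) ∪ B) := fun A B => by
      rw [Subfield.closure_union, Subfield.closure_eq, Subfield.closure_eq]
    have hc1 : a + b ∈ Subfield.closure ((A : Set Ω) ∪ B) := by rw [← hcl]; exact hc
    have hc2 : b + a ∈ Subfield.closure ((B : Set Ω) ∪ A) := by
      rw [← hcl, sup_comm, add_comm]; exact hc
    have ha1 := aux_mem_sup A' B' LA LB k hkA hkB hA hB hLM a b haL hbL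
      (Subfield.mem_closure_iff.1 hc1)
    have hb1 := aux_mem_sup B' A' LB LA k hkB hkA hB hA hLM.symm b a hbL haL
      (Subfield.mem_closure_iff.1 hc2)
    obtain ⟨x, hx, y, hy, hxy⟩ := aux_final A' B' K k
      (fun x hx => (le_sup_left : A ≤ A ⊔ B) hx) (fun x hx => (le_sup_right : B ≤ A ⊔ B) hx)
      hKk a b ha1 hb1 hc
    exact ⟨x, hx, y, hy, hxy⟩
  · rintro _ ⟨a, ha, b, hb, rfl⟩
    exact ⟨⟨a, isSeparable_algebraMap (F := A) (⟨a, ha⟩ : A), b,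
      isSeparable_algebraMap (F := B) (⟨b, hb⟩ : B), rfl⟩,
      add_mem ((le_sup_left : A ≤ A ⊔ B) ha) ((le_sup_right : B ≤ A ⊔ B) hb)⟩
end

section
/- Let Ω be an algebraically closed field and let E ⊆ A and E ⊆ B be subfields of Ω. Assume that the extensions A/E and B/E are regular (i.e. A, and likewise B, is linearly disjoint over E from the relative algebraic closure of E in Ω) and that A and B are linearly disjoint over E. Then (A^s·B) ∩ B^s = E^s·B, where A^s, B^s, E^s denote the relative separable closures in Ω of A, B, E respectively, and A^s·B (resp. E^s·B) denotes the compositum subfield of Ω generated by A^s and B (resp. by E^s and B). -/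
open TensorProduct

universe u

lemma exists_algHom_ne_zero {k R : Type*} [Field k] [IsAlgClosed k] [CommRing R] [IsDomain R]
    [Algebra k R] [Algebra.FiniteType k R] (r : R) (hr : r ≠ 0) :
    ∃ ψ : R →ₐ[k] k, ψ r ≠ 0 := by
  have : IsJacobsonRing R := isJacobsonRing_of_finiteType (A := k)
  have hj : (⊥ : Ideal R).jacobson = ⊥ :=
    IsJacobsonRing.out this (Ideal.isPrime_bot.isRadical)
  have : ∃ m : Ideal R, m.IsMaximal ∧ r ∉ m := by
    by_contra! h
    apply hr
    have : r ∈ (⊥ : Ideal R).jacobson := by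
      rw [Ideal.jacobson, Ideal.mem_sInf]
      rintro I ⟨_, hI⟩
      exact h I hI
    rwa [hj] at this
  obtain ⟨m, hm, hrm⟩ := this
  let : Field (R ⧸ m) := Ideal.Quotient.field m
  have : Module.Finite k (R ⧸ m) := finite_of_finite_type_of_isJacobsonRing k (R ⧸ m)
  have hb : Function.Bijective (algebraMap k (R ⧸ m)) :=
    IsAlgClosed.algebraMap_bijective_of_isIntegral
  let e : k ≃ₐ[k] (R ⧸ m) := AlgEquiv.ofBijective (Algebra.ofId k _) hb
  refine ⟨e.symm.toAlgHom.comp (Ideal.Quotient.mkₐ k m), ?_⟩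
  intro h
  apply hrm
  have : e.symm (Ideal.Quotient.mk m r) = 0 := h
  rw [map_eq_zero_iff _ e.symm.injective] at this
  exact Ideal.Quotient.eq_zero_iff_mem.mp this

lemma noZeroDiv_aux {k R K : Type*} [Field k] [IsAlgClosed k] [CommRing R] [IsDomain R]
    [Algebra k R] [Algebra.FiniteType k R] [Field K] [Algebra k K] :
    NoZeroDivisors (R ⊗[k] K) := by
  let b := Module.Basis.ofVectorSpace k K
  let c := Algebra.TensorProduct.basis R b
  refine ⟨fun {u v} huv => ?_⟩
  by_contra! h
  have hcoord : ∀ w : R ⊗[k] K, w ≠ 0 → ∃ i, c.repr w i ≠ 0 := by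
    intro w hw
    by_contra! hh
    exact hw (c.repr.map_eq_zero_iff.mp (Finsupp.ext hh))
  obtain ⟨i, hi⟩ := hcoord u h.1
  obtain ⟨j, hj⟩ := hcoord v h.2
  obtain ⟨ψ, hψ⟩ := exists_algHom_ne_zero (k := k) _ (mul_ne_zero hi hj)
  rw [map_mul] at hψ
  let Ψ : R ⊗[k] K →ₐ[k] K := Algebra.TensorProduct.lift ((Algebra.ofId k K).comp ψ)
    (AlgHom.id k K) (fun _ _ => Commute.all _ _)
  have hΨ : ∀ w i, b.repr (Ψ w) i = ψ (c.repr w i) := by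
    intro w i
    induction w with
    | zero => simp
    | add x y hx hy => simp [hx, hy]
    | tmul r x =>
      simp only [Ψ, c, Algebra.TensorProduct.lift_tmul, Algebra.TensorProduct.basis_repr_tmul]
      simp [Algebra.ofId_apply, ← Algebra.smul_def]
  have h0 : Ψ u * Ψ v = 0 := by rw [← map_mul, huv, map_zero]
  rcases mul_eq_zero.mp h0 with h1 | h1
  · apply left_ne_zero_of_mul hψ
    rw [← hΨ, h1]; simp
  · apply right_ne_zero_of_mul hψ
    rw [← hΨ, h1]; simp

lemma isDomain_tensor {k L K : Type*} [Field k] [IsAlgClosed k] [Field L]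
    [Algebra k L] [Field K] [Algebra k K] :
    IsDomain (K ⊗[k] L) := by
  have : NoZeroDivisors (K ⊗[k] L) := by
    refine ⟨fun {u v} huv => ?_⟩
    obtain ⟨D1, h1, hu⟩ := exists_fg_and_mem_baseChange u
    obtain ⟨D2, h2, hv⟩ := exists_fg_and_mem_baseChange v
    have hle : ∀ D D' : Subalgebra k L, D ≤ D' → ∀ w, w ∈ D.baseChange K →
        w ∈ D'.baseChange K := by
      rintro D D' h w ⟨z, rfl⟩
      refine ⟨Algebra.TensorProduct.map (AlgHom.id K K) (Subalgebra.inclusion h) z, ?_⟩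
      induction z with
      | zero => simp
      | add x y hx hy => simp only [map_add, hx, hy]
      | tmul r x => simp
    obtain ⟨u, rfl⟩ := hle D1 (D1 ⊔ D2) le_sup_left _ hu
    obtain ⟨v, rfl⟩ := hle D2 (D1 ⊔ D2) le_sup_right _ hv
    have hfg : (D1 ⊔ D2).FG := h1.sup h2
    have : Algebra.FiniteType k ↥(D1 ⊔ D2) := (D1 ⊔ D2).fg_iff_finiteType.mp hfg
    have := noZeroDiv_aux (k := k) (R := ↥(D1 ⊔ D2)) (K := K)
    have : NoZeroDivisors (K ⊗[k] ↥(D1 ⊔ D2)) :=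
      (Algebra.TensorProduct.comm k K ↥(D1 ⊔ D2)).toMulEquiv.noZeroDivisors
    have h_inj : Function.Injective
      (Algebra.TensorProduct.map (AlgHom.id K K) (D1 ⊔ D2).val) :=
      Module.Flat.lTensor_preserves_injective_linearMap (M := K) (D1 ⊔ D2).val.toLinearMap
        Subtype.val_injective
    have h0 : u * v = 0 := h_inj (by rw [map_mul, map_zero]; exact huv)
    rcases mul_eq_zero.mp h0 with h | h
    · left; rw [h]; simp
    · right; rw [h]; simp
  exact NoZeroDivisors.to_isDomain _

lemma inj_of_integral {A B R0 K L k Ω : Type*} [Field A] [Field B] [CommRing R0] [Field K] [Field L]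
    [Field k] [IsAlgClosed k] [Field Ω] [Algebra k K] [Algebra k L] [Algebra A K] [Algebra B L]
    [Algebra.IsIntegral A K] [Algebra.IsIntegral B L] (jA : A →+* R0) (jB : B →+* R0)
    (f : R0 →+* K ⊗[k] L) (hA : ∀ a, f (jA a) = algebraMap A K a ⊗ₜ 1)
    (hB : ∀ b, f (jB b) = 1 ⊗ₜ algebraMap B L b)
    (φ : K ⊗[k] L →+* Ω) (hφ : Function.Injective (φ.comp f)) : Function.Injective φ := by
  let := f.toAlgebra
  have := isDomain_tensor (k := k) (K := K) (L := L)
  have hint : Algebra.IsIntegral R0 (K ⊗[k] L) := by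
    refine ⟨fun w => ?_⟩
    induction w with
    | zero => exact isIntegral_zero
    | add x y hx hy => exact hx.add hy
    | tmul x y =>
      have h1 : IsIntegral R0 (x ⊗ₜ[k] (1 : L)) :=
        IsIntegral.map_of_comp_eq jA (Algebra.TensorProduct.includeLeft : K →ₐ[k] K ⊗[k] L).toRingHom
          (by ext a; exact hA a) (Algebra.IsIntegral.isIntegral (R := A) x)
      have h2 : IsIntegral R0 ((1 : K) ⊗ₜ[k] y) :=
        IsIntegral.map_of_comp_eq jB
          (Algebra.TensorProduct.includeRight : L →ₐ[k] K ⊗[k] L).toRingHom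
          (by ext a; exact hB a) (Algebra.IsIntegral.isIntegral (R := B) y)
      simpa using h1.mul h2
  have : Nontrivial R0 := f.domain_nontrivial
  rw [RingHom.injective_iff_ker_eq_bot]
  apply Ideal.eq_bot_of_comap_eq_bot (R := R0)
  change Ideal.comap f (RingHom.ker φ) = ⊥
  rw [RingHom.comap_ker]
  exact (RingHom.injective_iff_ker_eq_bot _).mp hφ

lemma key {E A B K L k Ω : Type*} [Field E] [Field A] [Field B] [Field K] [Field L]
    [Field k] [IsAlgClosed k] [Field Ω] [Algebra E A] [Algebra E B] [Algebra E k] [Algebra k K]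
    [Algebra k L] [Algebra A K] [Algebra B L] [Algebra E K] [Algebra E L]
    [IsScalarTower E k K] [IsScalarTower E A K] [IsScalarTower E k L] [IsScalarTower E B L]
    [Algebra.IsIntegral A K] [Algebra.IsIntegral B L] [Algebra k Ω]
    (gK : K →ₐ[k] Ω) (gL : L →ₐ[k] Ω)
    (hd : ∀ (n : ℕ) (a : Fin n → A), LinearIndependent E a → ∀ b : Fin n → B,
      ∑ i, gK (algebraMap A K (a i)) * gL (algebraMap B L (b i)) = 0 → ∀ i, b i = 0)
    {ι : Type*} (e : Module.Basis ι k K) (y : ι →₀ L)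
    (hy : (y.sum fun i z => gK (e i) * gL z) = 0) : y = 0 := by
  let T := K ⊗[k] L
  let φ : T →ₐ[k] Ω := Algebra.TensorProduct.productMap gK gL
  have hφm : ∀ (x : K) (z : L), φ (x ⊗ₜ[k] z) = gK x * gL z := fun x z =>
    Algebra.TensorProduct.productMap_apply_tmul gK gL x z
  let iA : A →ₐ[E] T :=
    { toRingHom := (Algebra.TensorProduct.includeLeft : K →ₐ[k] T).toRingHom.comp (algebraMap A K)
      commutes' := fun r => by
        change (algebraMap A K (algebraMap E A r)) ⊗ₜ[k] (1 : L) = _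
        rw [← IsScalarTower.algebraMap_apply E A K]
        rfl }
  let iB : B →ₐ[E] T :=
    { toRingHom := (Algebra.TensorProduct.includeRight : L →ₐ[k] T).toRingHom.comp (algebraMap B L)
      commutes' := fun r => by
        change (1 : K) ⊗ₜ[k] (algebraMap B L (algebraMap E B r)) = (algebraMap E K r) ⊗ₜ[k] (1 : L)
        rw [← IsScalarTower.algebraMap_apply E B L, IsScalarTower.algebraMap_apply E k L,
          IsScalarTower.algebraMap_apply E k K, Algebra.algebraMap_eq_smul_one (A := L),
          Algebra.algebraMap_eq_smul_one (A := K), TensorProduct.smul_tmul] }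
  let f : A ⊗[E] B →ₐ[E] T := Algebra.TensorProduct.productMap iA iB
  have hinj : Function.Injective φ := by
    refine inj_of_integral (A := A) (B := B)
      (Algebra.TensorProduct.includeLeft : A →ₐ[E] A ⊗[E] B).toRingHom
      (Algebra.TensorProduct.includeRight : B →ₐ[E] A ⊗[E] B).toRingHom f.toRingHom ?_ ?_
      φ.toRingHom ?_
    · intro a
      change f (a ⊗ₜ 1) = _
      simp only [f, Algebra.TensorProduct.productMap_apply_tmul, map_one, mul_one]
      rfl
    · intro a
      change f (1 ⊗ₜ a) = _
      simp only [f, Algebra.TensorProduct.productMap_apply_tmul, map_one, one_mul]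
      rfl
    · rw [injective_iff_map_eq_zero]
      intro w hw
      let b := Module.Basis.ofVectorSpace E A
      obtain ⟨c, rfl⟩ := TensorProduct.eq_repr_basis_left b w
      have hfm : ∀ (x : A) (z : B), (φ.toRingHom.comp f.toRingHom) (x ⊗ₜ z) =
          gK (algebraMap A K x) * gL (algebraMap B L z) := by
        intro x z
        change φ (f (x ⊗ₜ z)) = _
        simp only [f, Algebra.TensorProduct.productMap_apply_tmul, map_mul]
        congr 1
        · exact (hφm _ _).trans (by simp)
        · exact (hφm _ _).trans (by simp)
      rw [Finsupp.sum, map_sum] at hw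
      simp only [hfm] at hw
      let s := c.support
      let eq := s.equivFin.symm
      have h0 := hd s.card (fun i => b (eq i)) (b.linearIndependent.comp (fun i => (eq i : _))
        (Subtype.val_injective.comp eq.injective)) (fun i => c (eq i)) (by
          rw [eq.sum_comp (fun j : s => gK (algebraMap A K (b j)) * gL (algebraMap B L (c j))),
            Finset.sum_coe_sort s (fun j => gK (algebraMap A K (b j)) * gL (algebraMap B L (c j)))]
          exact hw)
      have hc : c = 0 := by
        ext j
        by_contra hj
        have hj' : j ∈ s := Finsupp.mem_support_iff.mpr hj
        apply hj
        have := h0 (s.equivFin ⟨j, hj'⟩)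
        simpa [eq] using this
      rw [hc]; simp
  apply TensorProduct.sum_tmul_basis_left_eq_zero e y
  apply hinj
  rw [map_zero, ← hy, Finsupp.sum, map_sum]
  apply Finset.sum_congr rfl
  intro i _
  exact hφm _ _

lemma lindisj_bar {Ω : Type u} [Field Ω] [IsAlgClosed Ω]
    (E A B : Subfield Ω) (hEA : E ≤ A) (hEB : E ≤ B)
    (hdisj : LinDisjOver E (A : Set Ω) (B : Set Ω)) :
    ∃ (ι : Type u) (e : ι → Ω), (∀ x : Ω, IsAlgebraic A x → ∃ c : ι →₀ Ω,
        (∀ i, IsAlgebraic E (c i)) ∧ x = c.sum fun i z => e i * z) ∧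
      ∀ y : ι →₀ Ω, (∀ i, IsAlgebraic B (y i)) → (y.sum fun i z => e i * z) = 0 → y = 0 := by
  let : Algebra E A := (Subfield.inclusion hEA).toAlgebra
  let : Algebra E B := (Subfield.inclusion hEB).toAlgebra
  have : IsScalarTower E A Ω := IsScalarTower.of_algebraMap_eq' rfl
  have : IsScalarTower E B Ω := IsScalarTower.of_algebraMap_eq' rfl
  let k := algebraicClosure E Ω
  let K := algebraicClosure A Ω
  let L := algebraicClosure B Ω
  have hk : IsAlgClosed k := IsAlgClosure.isAlgClosed E
  have hK : ∀ x : k, (algebraMap k Ω) x ∈ K := fun x =>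
    mem_algebraicClosure_iff.mpr ((mem_algebraicClosure_iff.mp x.2).extendScalars
      (Subfield.inclusion hEA).injective)
  have hL : ∀ x : k, (algebraMap k Ω) x ∈ L := fun x =>
    mem_algebraicClosure_iff.mpr ((mem_algebraicClosure_iff.mp x.2).extendScalars
      (Subfield.inclusion hEB).injective)
  let : Algebra k K := ((algebraMap k Ω).codRestrict K hK).toAlgebra
  let : Algebra k L := ((algebraMap k Ω).codRestrict L hL).toAlgebra
  have : IsScalarTower E k K := IsScalarTower.of_algebraMap_eq' rfl
  have : IsScalarTower E k L := IsScalarTower.of_algebraMap_eq' rfl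
  let gK : K →ₐ[k] Ω := { toRingHom := algebraMap K Ω, commutes' := fun _ => rfl }
  let gL : L →ₐ[k] Ω := { toRingHom := algebraMap L Ω, commutes' := fun _ => rfl }
  let e := Module.Basis.ofVectorSpace k K
  refine ⟨_, fun i => (e i : Ω), ?_, ?_⟩
  · intro x hx
    let x' : K := ⟨x, mem_algebraicClosure_iff.mpr hx⟩
    refine ⟨(e.repr x').mapRange (fun z : k => (z : Ω)) rfl, ?_, ?_⟩
    · intro i
      exact mem_algebraicClosure_iff.mp (e.repr x' i).2
    · rw [Finsupp.sum_mapRange_index (by simp)]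
      have h1 := congrArg gK (e.linearCombination_repr x')
      rw [Finsupp.linearCombination_apply, Finsupp.sum, map_sum] at h1
      rw [Finsupp.sum]
      refine (h1.symm.trans ?_ :)
      apply Finset.sum_congr rfl
      intro i _
      rw [map_smul, Algebra.smul_def, mul_comm]
      rfl
  · intro y hy hs
    let y' : _ →₀ L := Finsupp.onFinset y.support
      (fun i => ⟨y i, mem_algebraicClosure_iff.mpr (hy i)⟩) (by
        intro i hi
        rw [Finsupp.mem_support_iff]
        intro h
        exact hi (Subtype.ext h))
    have hy' : y = y'.mapRange (fun z : L => (z : Ω)) rfl := by ext i; rfl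
    have h0 : y' = 0 := by
      refine key (E := E) (A := A) (B := B) gK gL ?_ e y' ?_
      · intro n a ha b hs i
        apply Subtype.ext
        refine hdisj n (fun i => (a i : Ω)) (fun i => (a i).2) ?_ (fun i => (b i : Ω))
          (fun i => (b i).2) ?_ i
        · intro c hc hs i
          have := Fintype.linearIndependent_iff.mp ha (fun i => ⟨c i, hc i⟩) (by
            apply Subtype.ext
            rw [AddSubmonoidClass.coe_finsetSum]
            exact hs) i
          exact congrArg Subtype.val this
        · rw [← hs]
          exact Finset.sum_congr rfl fun i _ => mul_comm _ _
      · rw [hy', Finsupp.sum_mapRange_index (by simp)] at hs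
        exact hs
    rw [hy', h0]; simp

lemma mem_of_bar {Ω : Type*} [Field Ω] [IsAlgClosed Ω]
    (E A B : Subfield Ω) (hEA : E ≤ A) (hEB : E ≤ B)
    (hdisj : LinDisjOver E (A : Set Ω) (B : Set Ω)) (M : Subfield Ω)
    (hM : ∀ x : Ω, IsAlgebraic E x → x ∈ M) (hBM : B ≤ M) (hMB : ∀ x ∈ M, IsAlgebraic B x)
    (x : Ω) (hx : IsAlgebraic B x)
    (hx' : x ∈ Subfield.closure (relSepClosure A ∪ (B : Set Ω))) : x ∈ M := by
  obtain ⟨ι, e, hspan, hind⟩ := lindisj_bar E A B hEA hEB hdisj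
  have hmem : ∀ z ∈ Subring.closure (relSepClosure A ∪ (B : Set Ω)),
      ∃ c : ι →₀ M, z = c.sum fun i m => (m : Ω) • e i := by
    intro z hz
    have h1 : z ∈ Algebra.adjoin M (algebraicClosure A Ω : Set Ω) := by
      have : Subring.closure (relSepClosure A ∪ (B : Set Ω)) ≤
          (Algebra.adjoin M (algebraicClosure A Ω : Set Ω)).toSubring := by
        rw [Subring.closure_le]
        rintro w (hw | hw)
        · apply Algebra.subset_adjoin
          exact mem_algebraicClosure_iff.mpr (IsSeparable.isIntegral hw).isAlgebraic
        · exact (Algebra.adjoin M _).algebraMap_mem (⟨w, hBM hw⟩ : M)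
      exact this hz
    rw [← Subalgebra.mem_toSubmodule, Algebra.adjoin_eq_span] at h1
    have h2 : (Submonoid.closure (algebraicClosure A Ω : Set Ω) : Set Ω) ⊆
        (algebraicClosure A Ω : Set Ω) := by
      have : Submonoid.closure (algebraicClosure A Ω : Set Ω) ≤
        (algebraicClosure A Ω).toSubfield.toSubmonoid := Submonoid.closure_le.mpr le_rfl
      exact this
    have h3 : Submodule.span M (Submonoid.closure (algebraicClosure A Ω : Set Ω) : Set Ω) ≤
        Submodule.span M (Set.range e) := by
      rw [Submodule.span_le]
      intro w hw
      obtain ⟨c, hc, rfl⟩ := hspan w (mem_algebraicClosure_iff.mp (h2 hw))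
      refine Submodule.sum_mem _ fun i _ => ?_
      have := Submodule.smul_mem (Submodule.span M (Set.range e)) (⟨c i, hM _ (hc i)⟩ : M)
        (Submodule.subset_span ⟨i, rfl⟩)
      change e i * c i ∈ _
      rw [mul_comm]
      exact this
    obtain ⟨c, hc⟩ := Finsupp.mem_span_range_iff_exists_finsupp.mp (h3 h1)
    exact ⟨c, hc.symm⟩
  obtain ⟨r, hr, s, hs, rfl⟩ := Subfield.mem_closure_iff.mp hx'
  by_cases hs0 : s = 0
  · rw [hs0, div_zero]; exact M.zero_mem
  obtain ⟨c, hc⟩ := hmem r hr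
  obtain ⟨d, hd⟩ := hmem s hs
  set x := r / s with hxdef
  have hxs : x * s = r := div_mul_cancel₀ r hs0
  let c' : ι →₀ Ω := c.mapRange (fun z : M => (z : Ω)) rfl
  let d' : ι →₀ Ω := d.mapRange (fun z : M => (z : Ω)) rfl
  have hc' : r = c'.sum fun i z => e i * z := by
    rw [hc, Finsupp.sum_mapRange_index (by simp)]
    exact Finset.sum_congr rfl fun i _ => mul_comm _ _
  have hd' : s = d'.sum fun i z => e i * z := by
    rw [hd, Finsupp.sum_mapRange_index (by simp)]
    exact Finset.sum_congr rfl fun i _ => mul_comm _ _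
  have h0 : x • d' - c' = 0 := by
    apply hind
    · intro i
      exact (hx.mul (hMB _ (d i).2)).sub (hMB _ (c i).2)
    · rw [Finsupp.sum_sub_index (by intros; ring), Finsupp.sum_smul_index (by simp), ← hc', ← hxs,
        hd', Finsupp.mul_sum]
      rw [sub_eq_zero]
      exact Finset.sum_congr rfl fun i _ => by ring
  have : ∃ i, d' i ≠ 0 := by
    by_contra! h
    apply hs0
    rw [hd', show d' = 0 from Finsupp.ext h]; simp
  obtain ⟨i, hi⟩ := this
  have h1 : x * d' i = c' i := by
    have := DFunLike.congr_fun h0 i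
    simpa [sub_eq_zero] using this
  rw [eq_div_of_mul_eq hi h1]
  exact M.div_mem (c i).2 (d i).2

lemma alg_mono {Ω : Type*} [Field Ω] {F G : Subfield Ω} (h : F ≤ G) {x : Ω}
    (hx : IsAlgebraic F x) : IsAlgebraic G x := by
  let : Algebra F G := (Subfield.inclusion h).toAlgebra
  have : IsScalarTower F G Ω := IsScalarTower.of_algebraMap_eq' rfl
  exact hx.tower_top G

lemma exists_sep_pow {F Ω : Type*} [Field F] [Field Ω] [Algebra F Ω] (q : ℕ) [ExpChar F q]
    {x : Ω} (hx : IsAlgebraic F x) : ∃ n : ℕ, IsSeparable F (x ^ q ^ n) := by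
  obtain ⟨g, h1, n, h2⟩ := (minpoly.irreducible hx.isIntegral).hasSeparableContraction q
  exact ⟨n, h1.of_dvd <| minpoly.dvd F _ <| by
    simpa only [Polynomial.expand_aeval, minpoly.aeval] using congr_arg (Polynomial.aeval x) h2⟩

lemma sep_mono {Ω : Type*} [Field Ω] {F G : Subfield Ω} (h : F ≤ G) {x : Ω}
    (hx : IsSeparable F x) : IsSeparable G x := by
  let : Algebra F G := (Subfield.inclusion h).toAlgebra
  have : IsScalarTower F G Ω := IsScalarTower.of_algebraMap_eq' rfl
  exact hx.tower_top G

/-- Let `Ω` be an algebraically closed field and `E ⊆ A`, `E ⊆ B` subfields of `Ω`.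
If `A/E` and `B/E` are regular (each of `A`, `B` is linearly disjoint over `E` from
the relative algebraic closure of `E` in `Ω`) and `A`, `B` are linearly disjoint over
`E`, then `(Aˢ·B) ∩ Bˢ = Eˢ·B`, where `·` denotes the compositum subfield. -/
theorem sep_compositum_inter {Ω : Type*} [Field Ω] [IsAlgClosed Ω]
    (E A B : Subfield Ω) (hEA : E ≤ A) (hEB : E ≤ B)
    (hregA : LinDisjOver E (A : Set Ω) (relAlgClosure E))
    (hregB : LinDisjOver E (B : Set Ω) (relAlgClosure E))
    (hdisj : LinDisjOver E (A : Set Ω) (B : Set Ω)) :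
    ((Subfield.closure (relSepClosure A ∪ (B : Set Ω)) : Subfield Ω) : Set Ω) ∩
        relSepClosure B =
      ((Subfield.closure (relSepClosure E ∪ (B : Set Ω)) : Subfield Ω) : Set Ω) := by
  apply Set.Subset.antisymm
  · rintro x ⟨hx, hxB⟩
    set N := Subfield.closure (relSepClosure E ∪ (B : Set Ω)) with hN
    have hBN : B ≤ N := fun b hb => Subfield.subset_closure (Or.inr hb)
    have hEN : ∀ b, IsSeparable E b → b ∈ N := fun b hb => Subfield.subset_closure (Or.inl hb)
    have hxM := mem_of_bar E A B hEA hEB hdisj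
      (Subfield.closure (relAlgClosure E ∪ (B : Set Ω)))
      (fun b hb => Subfield.subset_closure (Or.inl hb))
      (fun b hb => Subfield.subset_closure (Or.inr hb)) (by
        intro y hy
        have : Subfield.closure (relAlgClosure E ∪ (B : Set Ω)) ≤
            (algebraicClosure B Ω).toSubfield := by
          rw [Subfield.closure_le]
          rintro w (hw | hw)
          · exact mem_algebraicClosure_iff.mpr (alg_mono hEB hw)
          · exact (algebraicClosure B Ω).algebraMap_mem ⟨w, hw⟩
        exact mem_algebraicClosure_iff.mp (this hy)) x (IsSeparable.isIntegral hxB).isAlgebraic hx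
    have hle : Subfield.closure (relAlgClosure E ∪ (B : Set Ω)) ≤
        (perfectClosure N Ω).toSubfield := by
      rw [Subfield.closure_le]
      rintro w (hw | hw)
      · obtain ⟨q, hq⟩ := ExpChar.exists Ω
        have : ExpChar E q := (algebraMap E Ω).expChar (algebraMap E Ω).injective q
        have : ExpChar N q := (algebraMap N Ω).expChar (algebraMap N Ω).injective q
        refine (mem_perfectClosure_iff_pow_mem q).mpr ?_
        obtain ⟨n, hn⟩ := exists_sep_pow (F := E) q hw
        exact ⟨n, ⟨_, hEN _ hn⟩, rfl⟩
      · exact (perfectClosure N Ω).algebraMap_mem ⟨w, hBN hw⟩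
    have h1 : x ∈ separableClosure N Ω ⊓ perfectClosure N Ω :=
      ⟨mem_separableClosure_iff.mpr (sep_mono hBN hxB), hle hxM⟩
    rw [separableClosure_inf_perfectClosure] at h1
    obtain ⟨y, rfl⟩ := IntermediateField.mem_bot.mp h1
    exact y.2
  · have : Subfield.closure (relSepClosure E ∪ (B : Set Ω)) ≤
        Subfield.closure (relSepClosure A ∪ (B : Set Ω)) ⊓ (separableClosure B Ω).toSubfield := by
      rw [Subfield.closure_le]
      rintro w (hw | hw)
      · exact ⟨Subfield.subset_closure (Or.inl (sep_mono hEA hw)),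
          mem_separableClosure_iff.mpr (sep_mono hEB hw)⟩
      · exact ⟨Subfield.subset_closure (Or.inr hw),
          (separableClosure B Ω).algebraMap_mem ⟨w, hw⟩⟩
    intro x hx
    exact ⟨(this hx).1, mem_separableClosure_iff.mp (this hx).2⟩
end

section
/- Let Ω be a field, E an algebraically closed subfield of Ω, and a, b, d ∈ Ω algebraically independent over E. Write acl(F) for the relative algebraic closure in Ω of a subfield F of Ω, and E(a), E(a,d), E(b,d) for the subfields of Ω generated over E by the indicated elements. Then a·d + b ∈ acl(E(a,d)) + acl(E(b,d)), but a·d + b ∉ acl(E(a,d)) and a·d + b ∉ acl(E(a)) + acl(E(b,d)). -/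
open Pointwise

open Polynomial in
theorem aux_core {Ω : Type*} [Field Ω] (E : Subfield Ω) [Infinite E] (K : Subfield Ω)
    (hEK : E ≤ K) (a d u w : Ω) (hd : Transcendental E d) (ha : Transcendental K a)
    (hdK : d ∈ K) (hw : w ∈ K) (hu : IsAlgebraic (Algebra.adjoin E {a}) u)
    (h : u = a * d - w) : False := by
  obtain ⟨p, hp0, hp⟩ := hu
  let φ : E[X] →+* Algebra.adjoin E {a} :=
    ((aeval a : E[X] →ₐ[E] Ω).codRestrict (Algebra.adjoin E {a})
      (fun q => aeval_mem_adjoin_singleton E a)).toRingHom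
  have hφv : ∀ q : E[X], ((φ q : Algebra.adjoin E {a}) : Ω) = aeval a q := fun q => rfl
  have hφ : Function.Surjective φ := by
    rintro ⟨x, hx⟩
    rw [Algebra.adjoin_singleton_eq_range_aeval] at hx
    obtain ⟨q, hq⟩ := hx
    exact ⟨q, Subtype.ext hq⟩
  obtain ⟨q, rfl⟩ := Polynomial.map_surjective φ hφ p
  have hq0 : q ≠ 0 := by rintro rfl; simp at hp0
  let ι : E →+* K := Subfield.inclusion hEK
  let R : K[X] := q.eval₂ (mapRingHom ι) (C ⟨d, hdK⟩ * X - C ⟨w, hw⟩)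
  have hR : R = 0 := by
    by_contra hne
    refine ha ⟨R, hne, ?_⟩
    rw [aeval_def, ← coe_eval₂RingHom, Polynomial.hom_eval₂]
    rw [aeval_def, eval₂_map] at hp
    rw [← hp]
    congr 1
    · ext x
      · simp [φ, ι]; rfl
      · simp [φ]
    · simp only [coe_eval₂RingHom, eval₂_sub, eval₂_mul, eval₂_C, eval₂_X]
      rw [h, mul_comm]; rfl
  have key : ∀ e : E, q.leadingCoeff.eval e ≠ 0 → IsAlgebraic E ((e : Ω) * d - w) := by
    intro e he
    refine ⟨q.map (evalRingHom e), ?_, ?_⟩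
    · intro h0
      apply he
      have := congrArg (fun r => r.coeff q.natDegree) h0
      simpa using this
    · have h1 : ((R.eval (ι e) : K) : Ω) = 0 := by rw [hR]; simp
      rw [aeval_def, eval₂_map, ← h1]
      change _ = K.subtype (evalRingHom (ι e) R)
      rw [← RingHom.comp_apply, Polynomial.hom_eval₂]
      congr 1
      · ext x
        · simp [ι]; rfl
        · simp [ι]; rfl
      · simp [ι]
        rw [mul_comm]; rfl
  have hlc : q.leadingCoeff ≠ 0 := by simpa using hq0
  have hinf : {e : E | q.leadingCoeff.eval e ≠ 0}.Infinite := by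
    have := (q.leadingCoeff.finite_setOfPred_isRoot hlc).infinite_compl
    exact this
  obtain ⟨e₁, h₁, e₂, h₂, hne⟩ := hinf.nontrivial
  have := (key e₁ h₁).sub (key e₂ h₂)
  have h3 : IsAlgebraic E ((((e₁ - e₂)⁻¹ : E) : Ω) * (((e₁ : Ω) * d - w) - (e₂ * d - w))) :=
    (isAlgebraic_algebraMap (A := Ω) ((e₁ - e₂)⁻¹ : E)).mul this
  apply hd
  convert h3 using 1
  have : (e₁ : Ω) - e₂ ≠ 0 := by
    intro h; exact hne (Subtype.ext (sub_eq_zero.1 h))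
  push_cast
  field_simp
  ring

open IntermediateField.algebraAdjoinAdjoin in
theorem aux_alg {Ω : Type*} [Field Ω] (E : Subfield Ω) (S : Set Ω) (x : Ω) :
    x ∈ relAlgClosure (Subfield.closure ((E : Set Ω) ∪ S)) ↔
      IsAlgebraic (Algebra.adjoin E S) x := by
  have h : Subfield.closure ((E : Set Ω) ∪ S) = (IntermediateField.adjoin E S).toSubfield := by
    rw [IntermediateField.adjoin_toSubfield]
    congr 2
    ext y; simp [Subfield.algebraMap_ofSubfield]
  rw [h, IsFractionRing.isAlgebraic_iff (Algebra.adjoin E S) (IntermediateField.adjoin E S) Ω]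
  rfl

theorem ad_add_b_witness {Ω : Type*} [Field Ω] (E : Subfield Ω) [IsAlgClosed E]
    (a b d : Ω) (hindep : AlgebraicIndependent (↥E) ![a, b, d]) :
    a * d + b ∈
        relAlgClosure (Subfield.closure ((E : Set Ω) ∪ {a, d})) +
          relAlgClosure (Subfield.closure ((E : Set Ω) ∪ {b, d})) ∧
      a * d + b ∉ relAlgClosure (Subfield.closure ((E : Set Ω) ∪ {a, d})) ∧
      a * d + b ∉
        relAlgClosure (Subfield.closure ((E : Set Ω) ∪ {a})) +
          relAlgClosure (Subfield.closure ((E : Set Ω) ∪ {b, d})) := by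
  have hmem : ∀ (F : Subfield Ω) (x : Ω), x ∈ F → x ∈ relAlgClosure F := fun F x hx =>
    isAlgebraic_algebraMap (A := Ω) (⟨x, hx⟩ : F)
  have hgen : ∀ (S : Set Ω) (x : Ω), x ∈ S → x ∈ Subfield.closure ((E : Set Ω) ∪ S) :=
    fun S x hx => Subfield.subset_closure (Or.inr hx)
  have hadm : a * d ∈ Subfield.closure ((E : Set Ω) ∪ {a, d}) :=
    mul_mem (hgen _ _ (by simp)) (hgen _ _ (by simp))
  refine ⟨Set.add_mem_add (hmem _ _ hadm) (hmem _ _ (hgen _ _ (by simp))), ?_, ?_⟩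
  · intro h
    have hb : b ∈ relAlgClosure (Subfield.closure ((E : Set Ω) ∪ {a, d})) := by
      have h1 : IsAlgebraic _ _ := hmem _ _ hadm
      have h2 : IsAlgebraic _ _ := h
      have h3 := h2.sub h1
      rwa [add_sub_cancel_left] at h3
    rw [aux_alg] at hb
    have ht := hindep.transcendental_adjoin (s := {0, 2}) (i := 1) (by simp)
    rw [Set.image_pair] at ht
    exact ht hb
  · rintro ⟨u, hu, v, hv, huv⟩
    have ht := hindep.transcendental_adjoin (s := {1, 2}) (i := 0) (by simp)
    rw [Set.image_pair] at ht
    have hd : Transcendental E d := hindep.transcendental 2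
    rw [aux_alg] at hu
    set F := Subfield.closure ((E : Set Ω) ∪ {b, d}) with hF
    have hK : ∀ x, x ∈ (algebraicClosure F Ω).toSubfield ↔ x ∈ relAlgClosure F := fun x =>
      mem_algebraicClosure_iff
    have hEF : E ≤ F := fun x hx => Subfield.subset_closure (Or.inl hx)
    have : Infinite E := IsAlgClosed.instInfinite
    refine aux_core E (algebraicClosure F Ω).toSubfield
      (fun x hx => (hK x).2 (hmem _ _ (hEF hx))) a d u (v - b) hd ?_
      ((hK d).2 (hmem _ _ (hgen _ _ (by simp)))) ?_ hu ?_
    · intro hal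
      have hal' : IsAlgebraic (algebraicClosure F Ω) a := hal
      have : IsAlgebraic F a := hal'.restrictScalars F
      exact ht ((aux_alg E {b, d} a).1 this)
    · exact sub_mem ((hK v).2 hv) ((hK b).2 (hmem _ _ (hgen _ _ (by simp))))
    · have : u + v = a * d + b := huv
      linear_combination this
end

section
/- Let K be an algebraically closed field, n ≥ 1, I a prime ideal of the polynomial ring K[x₁,…,xₙ], and V = {x ∈ Kⁿ : f(x) = 0 for all f ∈ I} its zero locus. Let g ∈ K[x₁,…,xₙ] be a polynomial with g ∉ I, and let O = {x ∈ Kⁿ : g(x) ≠ 0}. Then the following are equivalent: (1) for every k ∈ ℤⁿ with k ≠ 0 and every c ∈ Kˣ, there is a point x ∈ V ∩ O with all coordinates nonzero such that x₁^{k₁}⋯xₙ^{kₙ} ≠ c; (2) for every k ∈ ℤⁿ with k ≠ 0 and every c ∈ Kˣ, there is a point x ∈ V with all coordinates nonzero such that x₁^{k₁}⋯xₙ^{kₙ} ≠ c; (3) there exist a field extension L of K and a point a ∈ Lⁿ with f(a) = 0 for all f ∈ I, g(a) ≠ 0, all coordinates aᵢ nonzero, and a multiplicatively independent over K, meaning that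 a₁^{k₁}⋯aₙ^{kₙ} ∉ K for every k ∈ ℤⁿ with k ≠ 0. -/
universe u

/-- Condition (1): for every `k ∈ ℤⁿ \ {0}` and `c ∈ Kˣ`, the quasi-affine variety
`V ∩ O` has a point with all coordinates nonzero where the Laurent monomial
`x₁^{k₁}⋯xₙ^{kₙ}` differs from `c`. -/
def NotInMonomialSetOpen {K : Type u} [Field K] {n : ℕ}
    (I : Ideal (MvPolynomial (Fin n) K)) (g : MvPolynomial (Fin n) K) : Prop :=
  ∀ k : Fin n → ℤ, k ≠ 0 → ∀ c : K, c ≠ 0 →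
    ∃ x : Fin n → K, (∀ f ∈ I, MvPolynomial.eval x f = 0) ∧
      MvPolynomial.eval x g ≠ 0 ∧ (∀ i, x i ≠ 0) ∧ (∏ i, x i ^ k i) ≠ c

/-- Condition (2): for every `k ∈ ℤⁿ \ {0}` and `c ∈ Kˣ`, the variety `V` has a point
with all coordinates nonzero where the Laurent monomial `x₁^{k₁}⋯xₙ^{kₙ}` differs
from `c`. -/
def NotInMonomialSet {K : Type u} [Field K] {n : ℕ}
    (I : Ideal (MvPolynomial (Fin n) K)) : Prop :=
  ∀ k : Fin n → ℤ, k ≠ 0 → ∀ c : K, c ≠ 0 →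
    ∃ x : Fin n → K, (∀ f ∈ I, MvPolynomial.eval x f = 0) ∧
      (∀ i, x i ≠ 0) ∧ (∏ i, x i ^ k i) ≠ c

/-- Condition (3): in some field extension `L` of `K` there is a point of `V ∩ O` with
all coordinates nonzero which is multiplicatively independent over `K`. -/
def HasMultIndepPoint {K : Type u} [Field K] {n : ℕ}
    (I : Ideal (MvPolynomial (Fin n) K)) (g : MvPolynomial (Fin n) K) : Prop :=
  ∃ (L : Type u) (_ : Field L) (φ : K →+* L) (a : Fin n → L),
    (∀ f ∈ I, MvPolynomial.eval₂ φ a f = 0) ∧ MvPolynomial.eval₂ φ a g ≠ 0 ∧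
    (∀ i, a i ≠ 0) ∧
    ∀ k : Fin n → ℤ, k ≠ 0 → (∏ i, a i ^ k i) ∉ Set.range φ

open MvPolynomial in
/-- The binomial attached to `x^k = c`. -/
noncomputable def binomPoly {K : Type u} [Field K] {n : ℕ} (k : Fin n → ℤ) (c : K) :
    MvPolynomial (Fin n) K :=
  (∏ i, X i ^ (k i).toNat) - C c * ∏ i, X i ^ (-k i).toNat

lemma binomPoly_eval {K L : Type u} [Field K] [Field L] {n : ℕ} (φ : K →+* L) (a : Fin n → L)
    (ha : ∀ i, a i ≠ 0) (k : Fin n → ℤ) (c : K) :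
    MvPolynomial.eval₂ φ a (binomPoly k c) = 0 ↔ (∏ i, a i ^ k i) = φ c := by
  have h1 : (∏ i, a i ^ k i) * ∏ i, a i ^ (-k i).toNat = ∏ i, a i ^ (k i).toNat := by
    rw [← Finset.prod_mul_distrib]
    refine Finset.prod_congr rfl fun i _ => ?_
    rw [← zpow_natCast, ← zpow_natCast, ← zpow_add₀ (ha i)]
    congr 1
    omega
  have h2 : ∏ i, a i ^ (-k i).toNat ≠ 0 :=
    Finset.prod_ne_zero_iff.mpr fun i _ => pow_ne_zero _ (ha i)
  have h3 : MvPolynomial.eval₂ φ a (binomPoly k c) =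
      ∏ i, a i ^ (k i).toNat - φ c * ∏ i, a i ^ (-k i).toNat := by
    rw [← MvPolynomial.coe_eval₂Hom]
    simp [binomPoly, map_prod]
  rw [h3, ← h1, sub_eq_zero, mul_left_inj' h2]

lemma aux12 {K : Type u} [Field K] {n : ℕ} (hn : 1 ≤ n) (I : Ideal (MvPolynomial (Fin n) K))
    (hI : I.IsPrime) (g : MvPolynomial (Fin n) K) (hg : g ∉ I) (h : NotInMonomialSet I) :
    HasMultIndepPoint I g := by
  let A := MvPolynomial (Fin n) K ⧸ I
  let L := FractionRing A
  let ψ : MvPolynomial (Fin n) K →+* L := (algebraMap A L).comp (Ideal.Quotient.mk I)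
  have hψ : ∀ f, ψ f = 0 ↔ f ∈ I := by
    intro f
    rw [← Ideal.Quotient.eq_zero_iff_mem]
    exact map_eq_zero_iff _ (IsFractionRing.injective A L)
  have he : ∀ f, MvPolynomial.eval₂ (ψ.comp MvPolynomial.C) (fun i => ψ (MvPolynomial.X i)) f
      = ψ f := by
    intro f
    exact (MvPolynomial.eval₂_comp_left ψ MvPolynomial.C MvPolynomial.X f).symm.trans
      (by rw [MvPolynomial.eval₂_eta])
  have hX : ∀ i, ψ (MvPolynomial.X i) ≠ 0 := by
    intro i hi
    have hk : (fun _ : Fin n => (1 : ℤ)) ≠ 0 := by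
      intro h0
      simpa using congrFun h0 ⟨0, hn⟩
    obtain ⟨x, hx, hx0, -⟩ := h _ hk 1 one_ne_zero
    exact hx0 i (by simpa using hx _ ((hψ _).1 hi))
  refine ⟨L, inferInstance, ψ.comp MvPolynomial.C, fun i => ψ (MvPolynomial.X i), ?_, ?_, hX, ?_⟩
  · intro f hf
    rw [he, hψ]
    exact hf
  · rw [he, Ne, hψ]
    exact hg
  · rintro k hk ⟨c, hc⟩
    have hc0 : c ≠ 0 := by
      rintro rfl
      rw [map_zero] at hc
      exact Finset.prod_ne_zero_iff.mpr (fun i _ => zpow_ne_zero _ (hX i)) hc.symm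
    obtain ⟨x, hx, hx0, hne⟩ := h k hk c hc0
    apply hne
    have hm := (binomPoly_eval _ _ hX k c).2 hc.symm
    rw [he, hψ] at hm
    exact (binomPoly_eval (RingHom.id K) x hx0 k c).1 (hx _ hm)

lemma aux31 {K : Type u} [Field K] [IsAlgClosed K] {n : ℕ} (I : Ideal (MvPolynomial (Fin n) K))
    (hI : I.IsPrime) (g : MvPolynomial (Fin n) K) (h : HasMultIndepPoint I g) :
    NotInMonomialSetOpen I g := by
  obtain ⟨L, _, φ, a, haI, hag, ha0, hind⟩ := h
  intro k hk c hc
  have hp : g * (∏ i, MvPolynomial.X i) * binomPoly k c ∉ I := by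
    intro hm
    have := haI _ hm
    rw [MvPolynomial.eval₂_mul, MvPolynomial.eval₂_mul, mul_eq_zero, mul_eq_zero] at this
    rcases this with (h1 | h1) | h1
    · exact hag h1
    · rw [← MvPolynomial.coe_eval₂Hom, map_prod] at h1
      simp only [MvPolynomial.coe_eval₂Hom, MvPolynomial.eval₂_X] at h1
      exact Finset.prod_ne_zero_iff.mpr (fun i _ => ha0 i) h1
    · exact hind k hk ⟨c, ((binomPoly_eval φ a ha0 k c).1 h1).symm⟩
  rw [← hI.radical, ← MvPolynomial.vanishingIdeal_zeroLocus_eq_radical (K := K),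
    MvPolynomial.mem_vanishingIdeal_iff] at hp
  push Not at hp
  obtain ⟨x, hx, hx0⟩ := hp
  simp only [map_mul, mul_ne_zero_iff, map_prod, MvPolynomial.aeval_X,
    Finset.prod_ne_zero_iff] at hx0
  obtain ⟨⟨h1, h2⟩, h3⟩ := hx0
  have h2' : ∀ i, x i ≠ 0 := fun i => h2 i (Finset.mem_univ i)
  refine ⟨x, fun f hf => hx f hf, h1, h2', fun he => h3 ?_⟩
  exact (binomPoly_eval (RingHom.id K) x h2' k c).2 he

/-- Let `K` be an algebraically closed field, `n ≥ 1`, `I` a prime ideal of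
`K[x₁,…,xₙ]` with zero locus `V`, and `O` the complement of the zero set of a
polynomial `g ∉ I`. Then the three conditions (1), (2), (3) above are equivalent. -/
theorem variety_monomial_tfae {K : Type u} [Field K] [IsAlgClosed K]
    {n : ℕ} (hn : 1 ≤ n) (I : Ideal (MvPolynomial (Fin n) K)) (hI : I.IsPrime)
    (g : MvPolynomial (Fin n) K) (hg : g ∉ I) :
    (NotInMonomialSetOpen I g ↔ NotInMonomialSet I) ∧
      (NotInMonomialSet I ↔ HasMultIndepPoint I g) := by
  have h12 : NotInMonomialSetOpen I g → NotInMonomialSet I := by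
    intro h k hk c hc
    obtain ⟨x, h1, -, h2, h3⟩ := h k hk c hc
    exact ⟨x, h1, h2, h3⟩
  have h23 := aux12 hn I hI g hg
  have h31 := aux31 I hI g
  exact ⟨⟨h12, fun h => h31 (h23 h)⟩, ⟨h23, fun h => h12 (h31 h)⟩⟩
end
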